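/- arXiv:2106.13700 — 2 statements merged into one kernel-verified Lean document; each statement's English description precedes it below -/
import Mathlib

section
/- Let l be a positive odd integer. Then there exists a matrix β with entries β_{i,j} ∈ {0,1} for i,j ∈ {1,…,l} satisfying the column-sum constraint Σ_{i=1}^l β_{i,j} = j for every j and having every row sum Σ_{j=1}^l β_{i,j} equal to (l+1)/2. Such a matrix is given by the cyclic assignment: dimension j uses the channels {(T_{j−1} + t) mod l : 0 ≤ t < j}, where T_j = Σ_{k=1}^j k and channels are identified with residues {0,…,l−1}. -/
theorem cyc_count_rows (l i m : ℕ) :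
    ∑ j ∈ Finset.Icc 1 m, ∑ t ∈ Finset.range j,
      (if ((∑ k ∈ Finset.Icc 1 (j - 1), k) + t) % l = i then 1 else 0) =
    ∑ n ∈ Finset.range (∑ k ∈ Finset.Icc 1 m, k), (if n % l = i then 1 else 0) := by
  induction m with
  | zero => simp
  | succ m ih =>
    rw [Finset.sum_Icc_succ_top (by omega), ih, Finset.sum_Icc_succ_top (by omega),
      Finset.sum_range_add _ (∑ k ∈ Finset.Icc 1 m, k) (m + 1), Nat.add_sub_cancel]

theorem cyc_count_block (l i q : ℕ) (hi : i < l) :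
    ∑ n ∈ Finset.range (l * q), (if n % l = i then 1 else 0) = q := by
  induction q with
  | zero => simp
  | succ q ih =>
    rw [Nat.mul_succ, Finset.sum_range_add, ih]
    congr 1
    have h : ∀ t ∈ Finset.range l, (if (l * q + t) % l = i then 1 else 0) =
        (if t = i then 1 else 0) := by
      intro t ht
      rw [Nat.mul_add_mod, Nat.mod_eq_of_lt (Finset.mem_range.1 ht)]
    rw [Finset.sum_congr rfl h]
    simp [hi]

theorem cyc_triangle (m : ℕ) : (∑ k ∈ Finset.Icc 1 m, k) * 2 = m * (m + 1) := by
  induction m with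
  | zero => simp
  | succ m ih =>
    rw [Finset.sum_Icc_succ_top (by omega), add_mul, ih]
    ring

theorem cyc_inj (l a t s : ℕ) (ht : t < l) (hs : s < l) (h : (a + t) % l = (a + s) % l) :
    t = s := by
  have h1 : t ≡ s [MOD l] := Nat.ModEq.add_left_cancel' a h
  exact Nat.ModEq.eq_of_lt_of_lt h1 ht hs

/-- For positive odd `l` there is a 0/1 weight-sharing indicator (channels identified with
residues `{0,…,l-1}`, dimensions `j ∈ {1,…,l}`) with column sums `∑_i β i j = j` and every
row sum equal to `(l+1)/2`; it is given by the cyclic assignment in which dimension `j` uses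
the channels `{(T_{j-1} + t) mod l : 0 ≤ t < j}` where `T_j = ∑_{k=1}^j k`. -/
theorem cyclic_indicator_of_odd (l : ℕ) (hl : 0 < l) (hodd : Odd l) :
    ∃ β : ℕ → ℕ → ℕ,
      (∀ i ∈ Finset.range l, ∀ j ∈ Finset.Icc 1 l, β i j = 0 ∨ β i j = 1) ∧
      (∀ j ∈ Finset.Icc 1 l, ∑ i ∈ Finset.range l, β i j = j) ∧
      (∀ i ∈ Finset.range l, ∑ j ∈ Finset.Icc 1 l, β i j = (l + 1) / 2) ∧
      (∀ i ∈ Finset.range l, ∀ j ∈ Finset.Icc 1 l,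
        (β i j = 1 ↔ ∃ t < j, ((∑ k ∈ Finset.Icc 1 (j - 1), k) + t) % l = i)) := by
  have hle : ∀ i j, j ∈ Finset.Icc 1 l → ((Finset.range j).filter
      (fun t => ((∑ k ∈ Finset.Icc 1 (j - 1), k) + t) % l = i)).card ≤ 1 := by
    intro i j hj
    have hj2 := (Finset.mem_Icc.1 hj).2
    rw [Finset.card_le_one]
    intro a ha b hb
    simp only [Finset.mem_filter, Finset.mem_range] at ha hb
    exact cyc_inj l _ a b (by omega) (by omega) (ha.2.trans hb.2.symm)
  refine ⟨fun i j => ((Finset.range j).filter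
      (fun t => ((∑ k ∈ Finset.Icc 1 (j - 1), k) + t) % l = i)).card, ?_, ?_, ?_, ?_⟩
  · intro i _ j hj
    have := hle i j hj
    dsimp only
    omega
  · intro j _
    dsimp only
    rw [← Finset.card_eq_sum_card_fiberwise (s := Finset.range j)
      (f := fun t => ((∑ k ∈ Finset.Icc 1 (j - 1), k) + t) % l) (t := Finset.range l)]
    · simp
    · intro t _
      simpa using Nat.mod_lt _ hl
  · intro i hi
    simp only [Finset.card_filter]
    rw [cyc_count_rows]
    obtain ⟨r, hr⟩ := hodd
    have h1 : (l + 1) / 2 = r + 1 := by omega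
    have h2 : (∑ k ∈ Finset.Icc 1 l, k) = l * (r + 1) := by
      have h3 := cyc_triangle l
      have h4 : l * (l + 1) = l * (r + 1) * 2 := by
        rw [mul_assoc]; congr 1; omega
      omega
    rw [h1, h2, cyc_count_block l i _ (Finset.mem_range.1 hi)]
  · intro i _ j hj
    have h := hle i j hj
    dsimp only
    constructor
    · intro h1
      obtain ⟨t, ht⟩ := Finset.card_pos.1 (by rw [h1]; exact one_pos)
      simp only [Finset.mem_filter, Finset.mem_range] at ht
      exact ⟨t, ht.1, ht.2⟩
    · rintro ⟨t, ht, h2⟩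
      refine le_antisymm h (Finset.card_pos.2 ⟨t, ?_⟩)
      simp only [Finset.mem_filter, Finset.mem_range]
      exact ⟨ht, h2⟩
end

section
/- Let l be any positive integer. Then there exists a matrix β with entries β_{i,j} ∈ {0,1} for i,j ∈ {1,…,l} satisfying the column-sum constraint Σ_{i=1}^l β_{i,j} = j for every j and the relaxed fairness condition |Σ_{j=1}^l β_{i₁,j} − Σ_{j=1}^l β_{i₂,j}| ≤ 1 for all channel indices i₁, i₂ ∈ {1,…,l}. -/
/-- For every positive `l` there is a 0/1 weight-sharing indicator on `{1,…,l} × {1,…,l}`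
with column sums `∑_{i=1}^l β i j = j` for every `j`, whose row sums (channel training
counts) pairwise differ by at most 1 (the relaxed training-fairness condition). -/
theorem relaxed_fair_indicator_exists (l : ℕ) (hl : 0 < l) :
    ∃ β : ℕ → ℕ → ℕ,
      (∀ i ∈ Finset.Icc 1 l, ∀ j ∈ Finset.Icc 1 l, β i j = 0 ∨ β i j = 1) ∧
      (∀ j ∈ Finset.Icc 1 l, ∑ i ∈ Finset.Icc 1 l, β i j = j) ∧
      (∀ i₁ ∈ Finset.Icc 1 l, ∀ i₂ ∈ Finset.Icc 1 l,
        |((∑ j ∈ Finset.Icc 1 l, β i₁ j : ℕ) : ℤ) -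
          ((∑ j ∈ Finset.Icc 1 l, β i₂ j : ℕ) : ℤ)| ≤ 1) := by
  classical
  let P : ℕ → ℕ → Prop := fun i j => (2 * j ≤ l ∧ i ≤ j) ∨ (l < 2 * j ∧ l < i + j)
  have row : ∀ i ∈ Finset.Icc 1 l, (∑ j ∈ Finset.Icc 1 l, (if P i j then 1 else 0)) =
      if i ≤ l / 2 then l / 2 + 1 else l - l / 2 := by
    intro i hi
    rw [Finset.mem_Icc] at hi
    rw [← Finset.card_filter]
    split_ifs with h
    · have e : (Finset.Icc 1 l).filter (fun j => P i j) =
          Finset.Icc i (l / 2) ∪ Finset.Icc (l + 1 - i) l := by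
        ext j
        simp only [P, Finset.mem_filter, Finset.mem_union, Finset.mem_Icc]
        omega
      have d : Disjoint (Finset.Icc i (l / 2)) (Finset.Icc (l + 1 - i) l) := by
        rw [Finset.disjoint_left]
        intro j
        simp only [Finset.mem_Icc]
        omega
      rw [e, Finset.card_union_of_disjoint d, Nat.card_Icc, Nat.card_Icc]
      omega
    · have e : (Finset.Icc 1 l).filter (fun j => P i j) = Finset.Icc (l / 2 + 1) l := by
        ext j
        simp only [P, Finset.mem_filter, Finset.mem_Icc]
        omega
      rw [e, Nat.card_Icc]
      omega
  refine ⟨fun i j => if P i j then 1 else 0, ?_, ?_, ?_⟩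
  · intro i _ j _
    by_cases h : P i j <;> simp [h]
  · intro j hj
    rw [Finset.mem_Icc] at hj
    rw [← Finset.card_filter]
    by_cases h : 2 * j ≤ l
    · have e : (Finset.Icc 1 l).filter (fun i => P i j) = Finset.Icc 1 j := by
        ext i
        simp only [P, Finset.mem_filter, Finset.mem_Icc]
        omega
      rw [e, Nat.card_Icc]
      omega
    · have e : (Finset.Icc 1 l).filter (fun i => P i j) = Finset.Icc (l + 1 - j) l := by
        ext i
        simp only [P, Finset.mem_filter, Finset.mem_Icc]
        omega
      rw [e, Nat.card_Icc]
      omega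
  · intro a ha b hb
    rw [row a ha, row b hb, abs_le]
    split_ifs <;> omega
end
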